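/- Fix 0 < T < ∞, α ∈ (3/2, 2) and δ ∈ [0, (2α−3)/2). For each N ≥ 1 let v^N: [0,T] → L⁴(0,1) be continuous with sup_N sup_{t∈[0,T]} |v^N(t)|_{L⁴} < ∞, and define y^N(t) := Σ_{k=1}^N (∫₀ᵗ e^{−(kπ)^α (t−s)} b_k^N(s) ds) e_k, where b_k^N(s) := −kπ ∫₀¹ v^N(s)(x)² √2·cos(kπx) dx (i.e. y^N(t) = ∫₀ᵗ e^{−A^{α/2}(t−s)} P_N ∂_x((v^N(s))²) ds). Then sup_N sup_{t∈[0,T]} |y^N(t)|_{C^δ} < ∞. -/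

import Mathlib

/-!
Write `λ_k = (k+1)π`, `c_k(s)` for the cosine coefficients of `v(s)²` and `Y_k(t)` for the `k`-th
sine coefficient of the convolution. Since `sin` is bounded and Lipschitz,
`|sin (λ x) - sin (λ y)| ≤ 2 (λ |x - y|)^δ`, so the `C^δ` norm is controlled by
`∑ λ_k^δ |Y_k(t)|` (`cNorm_le`). The parabolic smoothing `e^{-x} ≤ x^{-p}`, `0 ≤ p ≤ 1`, gives
`λ^{δ+1} e^{-λ^α τ} ≤ τ^{-p} λ^{-q}` for `τ > 0`, with `q = αp - 1 - δ`. The condition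
`δ < (2α-3)/2` is exactly what allows a choice of `p < 1` with `q > 1/2`: then `τ^{-p}` is integrable at `0`, and
`∑ λ_k^{-q} |c_k| ≤ ½ ∑ (λ_k^{-2q} + c_k²)` is bounded, because `∑ λ_k^{-2q} < ∞` and, by Bessel's
inequality for the cosines (`bessel_cos`), `∑ c_k² ≤ ∫ v⁴`.

Sum and time integral are exchanged without any discussion of measurability in time: a coefficient
whose integrand were not integrable would have integral `0` and drop out of the sum
(`sum_abs_integral_le`).
-/

open Real MeasureTheory Set

noncomputable section

/-- `sineEig k` is the eigenfunction `e_{k+1}(x) = √2 sin((k+1)πx)` (0-based indexing). -/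
def sineEig (k : ℕ) (x : ℝ) : ℝ := Real.sqrt 2 * Real.sin (((k : ℝ) + 1) * Real.pi * x)

/-- Fourier sine coefficient `⟨v, e_{k+1}⟩ = ∫₀¹ v(x) e_{k+1}(x) dx`. -/
def fco (v : ℝ → ℝ) (k : ℕ) : ℝ := ∫ x in (0:ℝ)..1, v x * sineEig k x

/-- Fractional Dirichlet heat semigroup `e^{-A^{α/2} t} v`. -/
def heatSG (α t : ℝ) (v : ℝ → ℝ) (x : ℝ) : ℝ :=
  ∑' k : ℕ, Real.exp (-(((k : ℝ) + 1) * Real.pi) ^ α * t) * fco v k * sineEig k x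

/-- Spectral Sobolev `H^β₂(0,1)` norm. -/
def hNorm (β : ℝ) (v : ℝ → ℝ) : ℝ :=
  Real.sqrt (∑' k : ℕ, (((k : ℝ) + 1) * Real.pi) ^ (2 * β) * fco v k ^ 2)

/-- Membership in `H^β₂(0,1)` (finiteness of the spectral norm). -/
def memH (β : ℝ) (v : ℝ → ℝ) : Prop :=
  Summable fun k : ℕ => (((k : ℝ) + 1) * Real.pi) ^ (2 * β) * fco v k ^ 2

/-- Supremum norm on `[0,1]`. -/
def supIcc (v : ℝ → ℝ) : ℝ := ⨆ x : Icc (0:ℝ) 1, |v (x : ℝ)|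

/-- Hölder seminorm of exponent `δ` on `[0,1]`. -/
def holderSemi (δ : ℝ) (v : ℝ → ℝ) : ℝ :=
  ⨆ p : Icc (0:ℝ) 1 × Icc (0:ℝ) 1,
    |v (p.1 : ℝ) - v (p.2 : ℝ)| / |(p.1 : ℝ) - (p.2 : ℝ)| ^ δ

/-- The `C^δ(0,1)` norm: sup norm plus Hölder seminorm (just the sup norm when `δ = 0`). -/
def cNorm (δ : ℝ) (v : ℝ → ℝ) : ℝ :=
  if δ = 0 then supIcc v else supIcc v + holderSemi δ v

/-- Membership in `C^δ(0,1)`: continuity plus finite Hölder seminorm. -/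
def memC (δ : ℝ) (u : ℝ → ℝ) : Prop :=
  ContinuousOn u (Icc 0 1) ∧
    BddAbove (Set.range fun p : Icc (0:ℝ) 1 × Icc (0:ℝ) 1 =>
      |u (p.1 : ℝ) - u (p.2 : ℝ)| / |(p.1 : ℝ) - (p.2 : ℝ)| ^ δ)

/-- `L^p(0,1)` norm. -/
def lpNorm (p : ℝ) (v : ℝ → ℝ) : ℝ := (∫ x in (0:ℝ)..1, |v x| ^ p) ^ (1 / p)

/-- Galerkin projection `P_N v` onto the first `N` modes. -/
def galerkin (N : ℕ) (v : ℝ → ℝ) (x : ℝ) : ℝ :=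
  ∑ k ∈ Finset.range N, fco v k * sineEig k x

/-- Spectral `H^β₂` norm of `(1 - P_N) v`. -/
def tailHNorm (β : ℝ) (N : ℕ) (v : ℝ → ℝ) : ℝ :=
  Real.sqrt (∑' k : ℕ,
    if k < N then 0 else (((k : ℝ) + 1) * Real.pi) ^ (2 * β) * fco v k ^ 2)

/-- `(1 - P_N) e^{-A^{α/2} t} v`. -/
def tailSG (α t : ℝ) (N : ℕ) (v : ℝ → ℝ) (x : ℝ) : ℝ :=
  ∑' k : ℕ, if k < N then 0
    else Real.exp (-(((k : ℝ) + 1) * Real.pi) ^ α * t) * fco v k * sineEig k x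

/-- Cosine coefficient `∫₀¹ g(x) √2 cos((k+1)πx) dx`. -/
def cco (g : ℝ → ℝ) (k : ℕ) : ℝ :=
  ∫ x in (0:ℝ)..1, g x * (Real.sqrt 2 * Real.cos (((k : ℝ) + 1) * Real.pi * x))

/-- Spectral `H^{-α/2}₂` norm of the distributional derivative `∂ₓ g`. -/
def dxHNorm (α : ℝ) (g : ℝ → ℝ) : ℝ :=
  Real.sqrt (∑' k : ℕ, (((k : ℝ) + 1) * Real.pi) ^ (2 - α) * cco g k ^ 2)


instance : Fact ((1 : ENNReal) ≤ 4) := ⟨by norm_num⟩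

/-- The frequency `λ_k = (k+1)π` of the mode with 0-based index `k`. -/
def freq (k : ℕ) : ℝ := ((k : ℝ) + 1) * Real.pi

lemma one_le_freq (k : ℕ) : 1 ≤ freq k := by
  unfold freq
  nlinarith [Real.pi_gt_three, (Nat.cast_nonneg k : (0:ℝ) ≤ k)]

lemma freq_pos (k : ℕ) : 0 < freq k := zero_lt_one.trans_le (one_le_freq k)

lemma abs_sin_sub_sin_le {δ l x y : ℝ} (h0 : 0 ≤ δ) (h1 : δ ≤ 1) (hl : 0 < l) :
    |Real.sin (l * x) - Real.sin (l * y)| ≤ 2 * (l ^ δ * |x - y| ^ δ) := by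
  rw [← Real.mul_rpow hl.le (abs_nonneg _)]
  have hz : 0 ≤ l * |x - y| := by positivity
  rcases le_total (l * |x - y|) 1 with h | h
  · have hA : |Real.sin (l * x) - Real.sin (l * y)| ≤ l * |x - y| := by
      have := Real.lipschitzWith_sin.dist_le_mul (l * x) (l * y)
      simpa [Real.dist_eq, ← mul_sub, abs_mul, abs_of_pos hl] using this
    have hB : l * |x - y| ≤ (l * |x - y|) ^ δ := by
      rcases hz.eq_or_lt with h2 | h2
      · rw [← h2]; positivity
      · simpa using Real.rpow_le_rpow_of_exponent_ge h2 h h1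
    linarith
  · have hA : |Real.sin (l * x) - Real.sin (l * y)| ≤ 2 :=
      (abs_sub _ _).trans (by linarith [Real.abs_sin_le_one (l * x), Real.abs_sin_le_one (l * y)])
    linarith [Real.one_le_rpow h h0]

/-- The `C^δ` norm of a sine polynomial is controlled by its weighted `ℓ¹` norm. -/
lemma cNorm_le {δ M : ℝ} (h0 : 0 ≤ δ) (h1 : δ ≤ 1) (N : ℕ) (Y : ℕ → ℝ)
    (hM : ∑ k ∈ Finset.range N, freq k ^ δ * |Y k| ≤ M) :
    cNorm δ (fun x => ∑ k ∈ Finset.range N, Y k * sineEig k x)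
      ≤ Real.sqrt 2 * M + 2 * Real.sqrt 2 * M := by
  have hs : 0 ≤ Real.sqrt 2 := Real.sqrt_nonneg 2
  have hM0 : 0 ≤ M := le_trans (Finset.sum_nonneg fun k _ => by
    have := freq_pos k
    positivity) hM
  have hsup : supIcc (fun x => ∑ k ∈ Finset.range N, Y k * sineEig k x) ≤ Real.sqrt 2 * M := by
    have : Nonempty (Icc (0:ℝ) 1) := ⟨⟨0, by simp⟩⟩
    refine ciSup_le fun x => ?_
    refine (Finset.abs_sum_le_sum_abs _ _).trans ?_
    refine le_trans ?_ (mul_le_mul_of_nonneg_left hM hs)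
    rw [Finset.mul_sum]
    refine Finset.sum_le_sum fun k _ => ?_
    rw [sineEig, abs_mul, abs_mul, abs_of_nonneg hs]
    have e1 := Real.abs_sin_le_one (((k : ℝ) + 1) * Real.pi * x)
    have e2 : 1 ≤ freq k ^ δ := Real.one_le_rpow (one_le_freq k) h0
    calc |Y k| * (Real.sqrt 2 * |Real.sin (((k : ℝ) + 1) * Real.pi * x)|)
        ≤ |Y k| * (Real.sqrt 2 * freq k ^ δ) := by gcongr; exact e1.trans e2
      _ = _ := by ring
  unfold cNorm
  split_ifs with hδ
  · have : 0 ≤ 2 * Real.sqrt 2 * M := by positivity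
    linarith
  · refine add_le_add hsup ?_
    have : Nonempty (Icc (0:ℝ) 1 × Icc (0:ℝ) 1) := ⟨⟨⟨0, by simp⟩, ⟨0, by simp⟩⟩⟩
    refine ciSup_le fun p => ?_
    refine div_le_of_le_mul₀ (by positivity) (by positivity) ?_
    rw [← Finset.sum_sub_distrib]
    refine (Finset.abs_sum_le_sum_abs _ _).trans ?_
    have : 2 * Real.sqrt 2 * (∑ k ∈ Finset.range N, freq k ^ δ * |Y k|)
        * |(p.1 : ℝ) - (p.2 : ℝ)| ^ δ ≤ 2 * Real.sqrt 2 * M * |(p.1 : ℝ) - (p.2 : ℝ)| ^ δ := by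
      gcongr
    refine le_trans ?_ this
    rw [Finset.mul_sum, Finset.sum_mul]
    refine Finset.sum_le_sum fun k _ => ?_
    have e := abs_sin_sub_sin_le (x := (p.1 : ℝ)) (y := (p.2 : ℝ)) h0 h1 (freq_pos k)
    rw [← mul_sub, abs_mul, sineEig, sineEig, ← mul_sub, abs_mul, abs_of_nonneg hs]
    calc |Y k| * (Real.sqrt 2 * |Real.sin (((k : ℝ) + 1) * Real.pi * p.1)
            - Real.sin (((k : ℝ) + 1) * Real.pi * p.2)|)
        ≤ |Y k| * (Real.sqrt 2 * (2 * (freq k ^ δ * |(p.1 : ℝ) - (p.2 : ℝ)| ^ δ))) := by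
          gcongr; exact e
      _ = _ := by ring

lemma integral_cos_nat_mul_pi (n : ℕ) (hn : n ≠ 0) :
    ∫ x in (0:ℝ)..1, Real.cos ((n : ℝ) * Real.pi * x) = 0 := by
  have hne : (n : ℝ) * Real.pi ≠ 0 := by positivity
  rw [intervalIntegral.integral_comp_mul_left _ hne]
  simp [Real.sin_nat_mul_pi]

lemma integral_cos_mul_cos (j k : ℕ) :
    ∫ x in (0:ℝ)..1, (Real.sqrt 2 * Real.cos (freq j * x)) * (Real.sqrt 2 * Real.cos (freq k * x))
      = if j = k then 1 else 0 := by
  have h2 : Real.sqrt 2 * Real.sqrt 2 = 2 := Real.mul_self_sqrt (by norm_num)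
  wlog hjk : k ≤ j generalizing j k
  · simp only [eq_comm (a := j), ← this k j (by omega)]
    congr 1; ext x; ring
  obtain ⟨d, rfl⟩ := Nat.exists_eq_add_of_le hjk
  have e : ∀ x : ℝ, (Real.sqrt 2 * Real.cos (freq (k + d) * x)) *
      (Real.sqrt 2 * Real.cos (freq k * x))
      = Real.cos ((d : ℝ) * Real.pi * x) + Real.cos (((2 * k + d + 2 : ℕ) : ℝ) * Real.pi * x) := by
    intro x
    have a : (d : ℝ) * Real.pi * x = freq (k + d) * x - freq k * x := by
      unfold freq; push_cast; ring
    have b : ((2 * k + d + 2 : ℕ) : ℝ) * Real.pi * x = freq (k + d) * x + freq k * x := by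
      unfold freq; push_cast; ring
    rw [a, b, Real.cos_sub, Real.cos_add]
    linear_combination (Real.cos (freq (k + d) * x) * Real.cos (freq k * x)) * h2
  simp_rw [e]
  rw [intervalIntegral.integral_add (by apply Continuous.intervalIntegrable; fun_prop)
    (by apply Continuous.intervalIntegrable; fun_prop),
    integral_cos_nat_mul_pi (2 * k + d + 2) (by omega)]
  rcases eq_or_ne d 0 with rfl | hd
  · simp
  · simp [integral_cos_nat_mul_pi d hd, hd]

lemma memLp_cos (k : ℕ) : MemLp (fun y => Real.sqrt 2 * Real.cos (freq k * y)) 2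
    (volume.restrict (Set.Ioc (0:ℝ) 1)) := by
  refine MemLp.of_bound (by fun_prop) (Real.sqrt 2) (Filter.Eventually.of_forall fun y => ?_)
  rw [Real.norm_eq_abs, abs_mul, abs_of_nonneg (Real.sqrt_nonneg 2)]
  exact mul_le_of_le_one_right (Real.sqrt_nonneg 2) (Real.abs_cos_le_one _)

lemma orthonormal_cos : Orthonormal ℝ (fun k => (memLp_cos k).toLp) := by
  rw [orthonormal_iff_ite]
  intro j k
  rw [L2.inner_def, ← integral_cos_mul_cos, intervalIntegral.integral_of_le zero_le_one]
  refine integral_congr_ae ?_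
  filter_upwards [(memLp_cos j).coeFn_toLp, (memLp_cos k).coeFn_toLp] with x h1 h2
  rw [h1, h2]
  simp [mul_comm]

/-- Bessel's inequality for the cosine system on `(0,1)`. -/
lemma bessel_cos {g : ℝ → ℝ} (hg : MemLp g 2 (volume.restrict (Set.Ioc (0:ℝ) 1))) (N : ℕ) :
    ∑ k ∈ Finset.range N, cco g k ^ 2 ≤ ∫ y in Set.Ioc (0:ℝ) 1, g y ^ 2 := by
  have h := orthonormal_cos.sum_inner_products_le (hg.toLp) (s := Finset.range N)
  have e1 : ∀ k, inner ℝ ((memLp_cos k).toLp) hg.toLp = cco g k := by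
    intro k
    rw [L2.inner_def, cco, intervalIntegral.integral_of_le zero_le_one]
    refine integral_congr_ae ?_
    filter_upwards [(memLp_cos k).coeFn_toLp, hg.coeFn_toLp] with x h1 h2
    rw [h1, h2]
    simp [freq]
  have e2 : ‖hg.toLp‖ ^ 2 = ∫ y in Set.Ioc (0:ℝ) 1, g y ^ 2 := by
    rw [← real_inner_self_eq_norm_sq, L2.inner_def]
    refine integral_congr_ae ?_
    filter_upwards [hg.coeFn_toLp] with x h2
    rw [h2]
    simp [sq]
  simpa only [e1, e2, Real.norm_eq_abs, sq_abs] using h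

lemma sum_cco_sq_le {B : ℝ} (w : Lp ℝ 4 (volume.restrict (Set.Ioc (0:ℝ) 1))) (hw : ‖w‖ ≤ B)
    (N : ℕ) : ∑ k ∈ Finset.range N, cco (fun y => w y ^ 2) k ^ 2 ≤ B ^ 4 := by
  have hm : MemLp w 4 (volume.restrict (Set.Ioc (0:ℝ) 1)) := Lp.memLp w
  have hi : Integrable (fun y => ‖w y‖ ^ 4) (volume.restrict (Set.Ioc (0:ℝ) 1)) :=
    hm.integrable_norm_pow (by norm_num)
  have e : ∀ y, (w y ^ 2) ^ 2 = ‖w y‖ ^ 4 := fun y => by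
    rw [Real.norm_eq_abs, ← pow_mul, ← (by decide : Even 4).pow_abs]
  have hg : MemLp (fun y => w y ^ 2) 2 (volume.restrict (Set.Ioc (0:ℝ) 1)) := by
    refine (memLp_two_iff_integrable_sq (hm.1.pow 2)).2 ?_
    simpa only [Pi.pow_apply, e] using hi
  refine (bessel_cos hg N).trans ?_
  simp_rw [e]
  have hn : ‖w‖ ^ 4 = ∫ y in Set.Ioc (0:ℝ) 1, ‖w y‖ ^ 4 := by
    rw [Lp.norm_def, hm.eLpNorm_eq_integral_rpow_norm (by norm_num) (by norm_num),
      ENNReal.toReal_ofReal (by positivity), ← Real.rpow_natCast, ← Real.rpow_mul (by positivity)]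
    norm_num
  rw [← hn]
  gcongr

lemma exp_neg_le_rpow_neg {x p : ℝ} (hx : 0 < x) (h0 : 0 ≤ p) (h1 : p ≤ 1) :
    Real.exp (-x) ≤ x ^ (-p) := by
  rw [Real.exp_neg, Real.rpow_neg hx.le]
  refine inv_anti₀ (by positivity) ?_
  rcases le_total x 1 with h | h
  · exact (Real.rpow_le_one hx.le h h0).trans (Real.one_le_exp hx.le)
  · calc x ^ p ≤ x ^ (1:ℝ) := Real.rpow_le_rpow_of_exponent_le h h1
      _ = x := Real.rpow_one x
      _ ≤ _ := by linarith [Real.add_one_le_exp x]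

/-- Terms with a non-integrable `f k` vanish on the left, so no integrability of the `f k` is
assumed. -/
lemma sum_abs_integral_le {t : ℝ} (ht : 0 ≤ t) (s : Finset ℕ) (f : ℕ → ℝ → ℝ) (G : ℝ → ℝ)
    (hG : IntervalIntegrable G volume 0 t)
    (hb : ∀ r ∈ Set.Ioo 0 t, ∑ k ∈ s, |f k r| ≤ G r) :
    ∑ k ∈ s, |∫ r in (0:ℝ)..t, f k r| ≤ ∫ r in (0:ℝ)..t, G r := by
  classical
  set F := s.filter fun k => IntervalIntegrable (f k) volume 0 t with hF
  have hFi : ∀ k ∈ F, IntervalIntegrable (fun r => |f k r|) volume 0 t :=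
    fun k hk => (Finset.mem_filter.1 hk).2.abs
  calc ∑ k ∈ s, |∫ r in (0:ℝ)..t, f k r| = ∑ k ∈ F, |∫ r in (0:ℝ)..t, f k r| := by
        refine (Finset.sum_subset (Finset.filter_subset _ _) fun k hk hk' => ?_).symm
        rw [intervalIntegral.integral_undef, abs_zero]
        exact fun h => hk' (Finset.mem_filter.2 ⟨hk, h⟩)
    _ ≤ ∑ k ∈ F, ∫ r in (0:ℝ)..t, |f k r| :=
        Finset.sum_le_sum fun k _ => intervalIntegral.abs_integral_le_integral_abs ht
    _ = ∫ r in (0:ℝ)..t, ∑ k ∈ F, |f k r| := (intervalIntegral.integral_finsetSum hFi).symm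
    _ ≤ _ := by
        refine intervalIntegral.integral_mono_on_of_le_Ioo ht ?_ hG fun r hr => ?_
        · have := IntervalIntegrable.sum F hFi
          simpa [Finset.sum_fn] using this
        · exact (Finset.sum_le_sum_of_subset_of_nonneg (Finset.filter_subset _ _)
            fun _ _ _ => abs_nonneg _).trans (hb r hr)

/-- uniform `C^δ` bound for the Burgers nonlinear convolution term, `L⁴` data. -/
theorem stmt16 (T α δ : ℝ) (hT : 0 < T) (hα : α ∈ Set.Ioo (3/2 : ℝ) 2)
    (hδ : δ ∈ Set.Ico (0:ℝ) ((2*α - 3)/2))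
    (v : ℕ → ℝ → Lp ℝ 4 (volume.restrict (Set.Ioc (0:ℝ) 1)))
    (hcont : ∀ N : ℕ, ContinuousOn (v N) (Set.Icc 0 T))
    (hbdd : ∃ B : ℝ, ∀ N : ℕ, 1 ≤ N → ∀ t ∈ Set.Icc (0:ℝ) T, ‖v N t‖ ≤ B) :
    ∃ B : ℝ, ∀ N : ℕ, 1 ≤ N → ∀ t ∈ Set.Icc (0:ℝ) T,
      cNorm δ (fun x => ∑ k ∈ Finset.range N,
        (∫ s in (0:ℝ)..t, Real.exp (-(((k : ℝ) + 1) * Real.pi) ^ α * (t - s)) *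
          (-(((k : ℝ) + 1) * Real.pi) *
            ∫ y in (0:ℝ)..1, (v N s y) ^ 2 *
              (Real.sqrt 2 * Real.cos (((k : ℝ) + 1) * Real.pi * y)))) *
        sineEig k x) ≤ B := by
  obtain ⟨B, hB⟩ := hbdd
  obtain ⟨hα1, hα2⟩ := hα
  obtain ⟨hδ0, hδ1⟩ := hδ
  -- The midpoint between the lower bound `(3/2 + δ)/α`, equivalent to `q > 1/2`, and `1`.
  obtain ⟨p, hp1, hp2⟩ : ∃ p, (3/2 + δ) / α < p ∧ p < 1 := by
    refine exists_between ?_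
    rw [div_lt_one (by linarith)]
    linarith
  have hp0 : 0 < p := lt_trans (by apply div_pos <;> linarith) hp1
  rw [div_lt_iff₀ (by linarith)] at hp1
  obtain ⟨q, hq⟩ : ∃ q, q = α * p - 1 - δ := ⟨_, rfl⟩
  have hq2 : 1 < 2 * q := by rw [hq]; linarith
  have hsum : Summable fun k : ℕ => freq k ^ (-(2 * q)) := by
    have h1 : Summable fun k : ℕ => ((k : ℝ) + 1) ^ (-(2 * q)) := by
      have := (summable_nat_add_iff 1).2 (Real.summable_nat_rpow.2 (neg_lt_neg hq2))
      simpa using this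
    refine (h1.mul_right (Real.pi ^ (-(2 * q)))).congr fun k => ?_
    rw [freq, Real.mul_rpow (by positivity) Real.pi_pos.le]
  obtain ⟨K, hK⟩ : ∃ K, K = ∑' k : ℕ, freq k ^ (-(2 * q)) := ⟨_, rfl⟩
  obtain ⟨M, hM⟩ : ∃ M, M = K + B ^ 4 := ⟨_, rfl⟩
  have hK0 : 0 ≤ K := hK ▸ tsum_nonneg fun k => Real.rpow_nonneg (freq_pos k).le _
  have hM0 : 0 ≤ M := by rw [hM]; positivity
  obtain ⟨R, hR⟩ : ∃ R, R = M * (T ^ (1 - p) / (1 - p)) := ⟨_, rfl⟩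
  refine ⟨Real.sqrt 2 * R + 2 * Real.sqrt 2 * R, fun N hN t ht => ?_⟩
  refine cNorm_le hδ0 (by linarith) N _ ?_
  have hcoef : ∀ s ∈ Set.Icc (0:ℝ) T,
      ∑ k ∈ Finset.range N, freq k ^ (-q) * |cco (fun y => v N s y ^ 2) k| ≤ M := by
    intro s hs
    have h1 := sum_cco_sq_le (v N s) (hB N hN s hs) N
    have h2 : ∑ k ∈ Finset.range N, freq k ^ (-(2 * q)) ≤ K :=
      hK ▸ hsum.sum_le_tsum _ fun k _ => Real.rpow_nonneg (freq_pos k).le _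
    calc _ ≤ ∑ k ∈ Finset.range N,
          (freq k ^ (-(2 * q)) + cco (fun y => v N s y ^ 2) k ^ 2) := by
          refine Finset.sum_le_sum fun k _ => ?_
          have e : freq k ^ (-(2 * q)) = (freq k ^ (-q)) ^ 2 := by
            rw [← Real.rpow_natCast, ← Real.rpow_mul (freq_pos k).le]
            congr 1; push_cast; ring
          rw [e, ← sq_abs (cco _ k)]
          nlinarith [sq_nonneg (freq k ^ (-q) - |cco (fun y => v N s y ^ 2) k|),
            sq_nonneg (freq k ^ (-q)), sq_nonneg (|cco (fun y => v N s y ^ 2) k|)]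
      _ ≤ M := by rw [Finset.sum_add_distrib, hM]; linarith
  have hGi : IntervalIntegrable (fun s => M * (t - s) ^ (-p)) volume 0 t := by
    have h := (intervalIntegral.intervalIntegrable_rpow' (a := 0) (b := t) (r := -p)
      (by linarith)).comp_sub_left t
    simpa using (h.symm.const_mul M)
  have hGint : ∫ s in (0:ℝ)..t, M * (t - s) ^ (-p) ≤ R := by
    rw [intervalIntegral.integral_const_mul,
      intervalIntegral.integral_comp_sub_left (fun s => s ^ (-p)) t,
      integral_rpow (Or.inl (by linarith)), hR]
    have hz : -p + 1 = 1 - p := by ring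
    rw [hz, sub_self, sub_zero, Real.zero_rpow (by linarith), sub_zero]
    have : 0 < 1 - p := by linarith
    have := ht.1
    have := ht.2
    gcongr
  refine le_trans ?_ hGint
  have key := sum_abs_integral_le ht.1 (Finset.range N)
    (fun k s => freq k ^ δ * (Real.exp (-freq k ^ α * (t - s)) *
      (-freq k * cco (fun y => v N s y ^ 2) k))) _ hGi ?_
  · refine le_trans (le_of_eq (Finset.sum_congr rfl fun k _ => ?_)) key
    rw [intervalIntegral.integral_const_mul, abs_mul,
      abs_of_nonneg (Real.rpow_nonneg (freq_pos k).le δ)]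
    rfl
  · intro s hs
    have hτ : 0 < t - s := by linarith [hs.2]
    have hc := hcoef s ⟨hs.1.le, hs.2.le.trans ht.2⟩
    refine le_trans ?_ (mul_le_mul_of_nonneg_right hc (Real.rpow_nonneg hτ.le (-p)))
    rw [Finset.sum_mul]
    refine Finset.sum_le_sum fun k _ => ?_
    have hf := freq_pos k
    have hexp : Real.exp (-freq k ^ α * (t - s)) ≤ freq k ^ (-(α * p)) * (t - s) ^ (-p) := by
      have h := exp_neg_le_rpow_neg (x := freq k ^ α * (t - s)) (by positivity) hp0.le hp2.le
      rw [Real.mul_rpow (by positivity) hτ.le, ← Real.rpow_mul hf.le] at h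
      convert h using 2 <;> ring_nf
    have hpow : freq k ^ δ * freq k ^ (-(α * p)) * freq k = freq k ^ (-q) := by
      rw [← Real.rpow_add hf, ← Real.rpow_add_one hf.ne']
      congr 1; rw [hq]; ring
    rw [abs_mul, abs_mul, abs_mul, abs_neg, abs_of_pos hf, Real.abs_exp,
      abs_of_nonneg (Real.rpow_nonneg hf.le δ)]
    calc _ ≤ freq k ^ δ * (freq k ^ (-(α * p)) * (t - s) ^ (-p) *
          (freq k * |cco (fun y => v N s y ^ 2) k|)) := by gcongr
      _ = freq k ^ (-q) * |cco (fun y => v N s y ^ 2) k| * (t - s) ^ (-p) := by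
          rw [← hpow]; ring
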